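/- Consider an L-layer CFN with hidden states h^{(ℓ)}_t ∈ ℝ^{n_ℓ} for 1 ≤ ℓ ≤ L, evolving by h^{(1)}_t = θ^{(1)}_t ⊙ tanh(h^{(1)}_{t−1}) + η^{(1)}_t ⊙ tanh(W^{(1)} x_t) and, for 2 ≤ ℓ ≤ L, h^{(ℓ)}_t = θ^{(ℓ)}_t ⊙ tanh(h^{(ℓ)}_{t−1}) + η^{(ℓ)}_t ⊙ tanh(W^{(ℓ)} h^{(ℓ−1)}_t), where all gate values θ^{(j)}_t(i), η^{(j)}_t(i) lie in [0, Θ] for some fixed Θ with 0 < Θ < 1. If W^{(1)} x_t = 0 for all t > T, then for every layer 1 ≤ ℓ ≤ L the hidden state converges to zero: lim_{t → ∞} h^{(ℓ)}_t = 0. -/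

import Mathlib

theorem cfn_sinh_le {x : ℝ} (hx : 0 ≤ x) : Real.sinh x ≤ x * Real.cosh x := by
  have hd : ∀ y : ℝ, HasDerivAt (fun y => y * Real.cosh y - Real.sinh y) (y * Real.sinh y) y := by
    intro y
    have := ((hasDerivAt_id y).mul (Real.hasDerivAt_cosh y)).sub (Real.hasDerivAt_sinh y)
    refine this.congr_deriv ?_
    simp
  have hm : MonotoneOn (fun y => y * Real.cosh y - Real.sinh y) (Set.Ici (0 : ℝ)) := by
    apply monotoneOn_of_deriv_nonneg (convex_Ici 0)
    · exact fun y _ => (hd y).continuousAt.continuousWithinAt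
    · exact fun y _ => (hd y).differentiableAt.differentiableWithinAt
    · intro y hy
      rw [interior_Ici] at hy
      rw [(hd y).deriv]
      have hy' : 0 ≤ y := le_of_lt hy
      exact mul_nonneg hy' (Real.sinh_nonneg_iff.2 hy')
  have := hm (Set.mem_Ici.2 le_rfl) (Set.mem_Ici.2 hx) hx
  simp at this
  linarith

theorem cfn_abs_tanh_le (x : ℝ) : |Real.tanh x| ≤ |x| := by
  rw [Real.tanh_eq_sinh_div_cosh, abs_div, Real.abs_sinh, abs_of_pos (Real.cosh_pos x),
    div_le_iff₀ (Real.cosh_pos x), ← Real.cosh_abs x]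
  exact cfn_sinh_le (abs_nonneg x)

theorem cfn_scalar (a b : ℕ → ℝ) (Θ : ℝ) (h0 : 0 < Θ) (h1 : Θ < 1)
    (hr : ∀ t, |a (t + 1)| ≤ Θ * |a t| + |b (t + 1)|)
    (hb : Filter.Tendsto b Filter.atTop (nhds 0)) :
    Filter.Tendsto a Filter.atTop (nhds 0) := by
  rw [Metric.tendsto_atTop] at hb ⊢
  intro ε hε
  obtain ⟨N, hN⟩ := hb ((1 - Θ) * (ε / 2)) (mul_pos (by linarith) (by linarith))
  have key : ∀ k, |a (N + k)| ≤ Θ ^ k * |a N| + ε / 2 := by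
    intro k
    induction k with
    | zero => simp; linarith
    | succ k ih =>
      have e1 := hr (N + k)
      have e2 := hN (N + k + 1) (by omega)
      rw [Real.dist_eq, sub_zero] at e2
      have e3 := mul_le_mul_of_nonneg_left ih h0.le
      rw [← add_assoc, pow_succ]
      nlinarith
  have hp : Filter.Tendsto (fun k : ℕ => Θ ^ k * |a N|) Filter.atTop (nhds 0) := by
    simpa using (tendsto_pow_atTop_nhds_zero_of_lt_one h0.le h1).mul_const |a N|
  obtain ⟨M, hM⟩ := (Metric.tendsto_atTop.1 hp) (ε / 2) (by linarith)
  refine ⟨N + M, fun t ht => ?_⟩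
  obtain ⟨k, rfl⟩ := Nat.exists_eq_add_of_le (show N ≤ t by omega)
  have e1 := hM k (by omega)
  rw [Real.dist_eq, sub_zero] at e1 ⊢
  have e2 := key k
  have e3 := le_abs_self (Θ ^ k * |a N|)
  linarith

theorem cfn_layer {n : ℕ} (g θ η u : ℕ → Fin n → ℝ) (Θ : ℝ) (h0 : 0 < Θ) (h1 : Θ < 1)
    (hgate : ∀ t i, (0 ≤ θ t i ∧ θ t i ≤ Θ) ∧ (0 ≤ η t i ∧ η t i ≤ Θ))
    (hr : ∀ t, 1 ≤ t → ∀ i,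
      g t i = θ t i * Real.tanh (g (t - 1) i) + η t i * Real.tanh (u t i))
    (hu : Filter.Tendsto u Filter.atTop (nhds 0)) :
    Filter.Tendsto g Filter.atTop (nhds 0) := by
  rw [tendsto_pi_nhds] at hu ⊢
  intro i
  refine cfn_scalar (fun t => g t i) (fun t => u t i) Θ h0 h1 (fun t => ?_) (hu i)
  obtain ⟨⟨a0, a1⟩, b0, b1⟩ := hgate (t + 1) i
  have e := hr (t + 1) (by omega) i
  rw [Nat.add_sub_cancel] at e
  change |g (t + 1) i| ≤ Θ * |g t i| + |u (t + 1) i|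
  rw [e]
  refine (abs_add_le _ _).trans (add_le_add ?_ ?_)
  · rw [abs_mul, abs_of_nonneg a0]
    exact mul_le_mul a1 (cfn_abs_tanh_le _) (abs_nonneg _) h0.le
  · rw [abs_mul, abs_of_nonneg b0]
    calc η (t + 1) i * |Real.tanh (u (t + 1) i)| ≤ 1 * |u (t + 1) i| :=
          mul_le_mul (by linarith) (cfn_abs_tanh_le _) (abs_nonneg _) zero_le_one
      _ = _ := one_mul _

/-- Multi-layer version of Lemma 2 of the paper: for an `L`-layer CFN whose
gate values all lie in `[0, Θ]` with `0 < Θ < 1`, if the embedded inputs vanish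
after time `T` (`W⁽¹⁾ x_t = 0` for `t > T`), then the hidden state of every
layer `1 ≤ ℓ ≤ L` converges to zero as `t → ∞`. -/
theorem multilayer_cfn_converges_to_zero (L : ℕ) (hL : 0 < L) (n : ℕ → ℕ)
    (W : (ℓ : ℕ) → Matrix (Fin (n ℓ)) (Fin (n (ℓ - 1))) ℝ)
    (x : ℕ → Fin (n 0) → ℝ)
    (h θ η : (ℓ : ℕ) → ℕ → Fin (n ℓ) → ℝ)
    (Θ : ℝ) (hΘ0 : 0 < Θ) (hΘ1 : Θ < 1)
    (hgate : ∀ ℓ, 1 ≤ ℓ → ℓ ≤ L → ∀ t i,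
      (0 ≤ θ ℓ t i ∧ θ ℓ t i ≤ Θ) ∧ (0 ≤ η ℓ t i ∧ η ℓ t i ≤ Θ))
    (hrec1 : ∀ t, 1 ≤ t → ∀ i,
      h 1 t i = θ 1 t i * Real.tanh (h 1 (t - 1) i)
        + η 1 t i * Real.tanh ((W 1).mulVec (x t) i))
    (hrec : ∀ ℓ, 2 ≤ ℓ → ℓ ≤ L → ∀ t, 1 ≤ t → ∀ i,
      h ℓ t i = θ ℓ t i * Real.tanh (h ℓ (t - 1) i)
        + η ℓ t i * Real.tanh ((W ℓ).mulVec (h (ℓ - 1) t) i))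
    (T : ℕ) (hx : ∀ t, T < t → (W 1).mulVec (x t) = 0) :
    ∀ ℓ, 1 ≤ ℓ → ℓ ≤ L →
      Filter.Tendsto (fun t => h ℓ t) Filter.atTop (nhds 0) := by
  intro ℓ hℓ
  induction ℓ, hℓ using Nat.le_induction with
  | base =>
    intro h1L
    refine cfn_layer (h 1) (θ 1) (η 1) (fun t => (W 1).mulVec (x t)) Θ hΘ0 hΘ1
      (hgate 1 le_rfl h1L) hrec1 ?_
    refine tendsto_const_nhds.congr' ?_
    filter_upwards [Filter.eventually_gt_atTop T] with t ht
    exact (hx t ht).symm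
  | succ k hk ih =>
    intro hkL
    have ih' := ih (by omega)
    refine cfn_layer (h (k + 1)) (θ (k + 1)) (η (k + 1))
      (fun t => (W (k + 1)).mulVec (h k t)) Θ hΘ0 hΘ1
      (hgate (k + 1) (by omega) hkL) (hrec (k + 1) (by omega) hkL) ?_
    have hc : Continuous (fun v : Fin (n k) → ℝ => (W (k + 1)).mulVec v) :=
      Continuous.matrix_mulVec continuous_const continuous_id
    have := (hc.tendsto 0).comp ih'
    rw [Matrix.mulVec_zero] at this
    exact this
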